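/- The unique maximizer (π_F, κ_F) of (π,κ) ↦ inf over (θ₁,θ₂) of F(π, κ, θ₁, θ₂) equals exactly one half of the unique maximizer (π_G, κ_G) of G, i.e. π_F = π_G/2 and κ_F = κ_G/2; moreover sup over (π,κ) of G minus sup over (π,κ) of inf over (θ₁,θ₂) of F equals (1/4)·[ι² + (λ−a+ρbι)²/((1−ρ²)b²)], which is nonnegative. (Thus an ambiguity-averse insurer cuts both investment and insurance in half, and the pointwise utility loss due to ambiguity aversion is (1/4)·[ι² + (λ−a+ρbι)²/((1−ρ²)b²)].) -/

import Mathlib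

/-!
In the coordinates `x = (σπ - ρbκ, -√(1 - ρ²)bκ)`, the exposures to the two independent noises, the
non-robust objective is `⟪m, x⟫ - ‖x‖² / 2`, where `m` is the market price of risk. Completing the
square in the distortion `θ`, the infimum of `⟪x, θ⟫ + ‖θ‖² / 2` is `-‖x‖² / 2`, so ambiguity
aversion just raises the risk aversion from `1` to `2`. With risk aversion `γ` the unique optimal
exposure is `γ⁻¹ • m`, with value `‖m‖² / (2γ)`; compare `γ = 1` and `γ = 2`.
-/

open scoped RealInnerProductSpace

section IteratedExtrema

variable {α β L : Type*} [ConditionallyCompleteLattice L] {f : α → β → L} {a : α} {b : β}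

theorem iSup_iSup_eq_of_forall_le (h : ∀ x y, f x y ≤ f a b) : ⨆ x, ⨆ y, f x y = f a b := by
  have : Nonempty β := ⟨b⟩
  have row_max : IsGreatest (Set.range (f a)) (f a b) :=
    ⟨Set.mem_range_self b, Set.forall_mem_range.2 (h a)⟩
  have row_sup_max : IsGreatest (Set.range fun x ↦ ⨆ y, f x y) (f a b) :=
    ⟨⟨a, row_max.csSup_eq⟩, Set.forall_mem_range.2 fun x ↦ ciSup_le (h x)⟩
  exact row_sup_max.csSup_eq

theorem iInf_iInf_eq_of_forall_le (h : ∀ x y, f a b ≤ f x y) : ⨅ x, ⨅ y, f x y = f a b :=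
  iSup_iSup_eq_of_forall_le (L := Lᵒᵈ) h

end IteratedExtrema

section MeanVariance

variable {E : Type*} [NormedAddCommGroup E] [InnerProductSpace ℝ E] {γ φ : ℝ} {m x : E}

/-- The mean-variance utility of the exposure `x` when the market price of risk is `m` and the
risk aversion is `γ`. -/
noncomputable def meanVariance (γ : ℝ) (m x : E) : ℝ :=
  ⟪m, x⟫ - γ / 2 * ‖x‖ ^ 2

theorem meanVariance_eq_sub_norm_sub_sq (hγ : γ ≠ 0) :
    meanVariance γ m x = ‖m‖ ^ 2 / (2 * γ) - γ / 2 * ‖x - γ⁻¹ • m‖ ^ 2 := by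
  rw [meanVariance, norm_sub_sq_real, real_inner_smul_right, real_inner_comm, norm_smul, mul_pow,
    Real.norm_eq_abs, sq_abs]
  field

theorem meanVariance_inv_smul (hγ : γ ≠ 0) :
    meanVariance γ m (γ⁻¹ • m) = ‖m‖ ^ 2 / (2 * γ) := by
  simp [meanVariance_eq_sub_norm_sub_sq hγ]

theorem forall_meanVariance_le_iff (hγ : 0 < γ) :
    (∀ y, meanVariance γ m y ≤ meanVariance γ m x) ↔ x = γ⁻¹ • m := by
  constructor
  · intro hmax
    have loss_nonpos : γ / 2 * ‖x - γ⁻¹ • m‖ ^ 2 ≤ 0 := by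
      have hle := hmax (γ⁻¹ • m)
      rw [meanVariance_inv_smul hγ.ne', meanVariance_eq_sub_norm_sub_sq hγ.ne'] at hle
      linarith
    have norm_sq_nonpos : ‖x - γ⁻¹ • m‖ ^ 2 ≤ 0 :=
      nonpos_of_mul_nonpos_right loss_nonpos (by positivity)
    rwa [sq_nonpos_iff, norm_sub_eq_zero_iff] at norm_sq_nonpos
  · rintro rfl y
    rw [meanVariance_inv_smul hγ.ne', meanVariance_eq_sub_norm_sub_sq hγ.ne']
    exact sub_le_self _ (by positivity)

theorem eq_inv_smul_of_surjective_of_forall_meanVariance_le {P : Type*} {T : P → E}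
    (hT : T.Surjective) (hγ : 0 < γ) {p : P}
    (hp : ∀ q, meanVariance γ m (T q) ≤ meanVariance γ m (T p)) : T p = γ⁻¹ • m :=
  (forall_meanVariance_le_iff hγ).1 (hT.forall.2 hp)

/-- The mean-variance utility when nature may shift the drift of the noise by `θ` at the entropic
cost `‖θ‖² / (2φ)`; the ambiguity aversion `φ` makes large distortions cheap. -/
noncomputable def distortedMeanVariance (γ φ : ℝ) (m x θ : E) : ℝ :=
  meanVariance γ m x + ⟪x, θ⟫ + ‖θ‖ ^ 2 / (2 * φ)

theorem distortedMeanVariance_eq_add_norm_add_sq (hφ : φ ≠ 0) (θ : E) :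
    distortedMeanVariance γ φ m x θ =
      meanVariance (γ + φ) m x + ‖θ + φ • x‖ ^ 2 / (2 * φ) := by
  rw [distortedMeanVariance, meanVariance, meanVariance, norm_add_sq_real, real_inner_smul_right,
    real_inner_comm x θ, norm_smul, mul_pow, Real.norm_eq_abs, sq_abs]
  field

theorem distortedMeanVariance_neg_smul (hφ : φ ≠ 0) :
    distortedMeanVariance γ φ m x (-(φ • x)) = meanVariance (γ + φ) m x := by
  simp [distortedMeanVariance_eq_add_norm_add_sq hφ]

theorem meanVariance_add_le_distortedMeanVariance (hφ : 0 < φ) (θ : E) :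
    meanVariance (γ + φ) m x ≤ distortedMeanVariance γ φ m x θ := by
  rw [distortedMeanVariance_eq_add_norm_add_sq hφ.ne']
  exact le_add_of_nonneg_right (by positivity)

theorem iInf_iInf_distortedMeanVariance {m x : EuclideanSpace ℝ (Fin 2)} (hφ : 0 < φ) :
    ⨅ θ₁ : ℝ, ⨅ θ₂ : ℝ, distortedMeanVariance γ φ m x !₂[θ₁, θ₂] = meanVariance (γ + φ) m x := by
  have worst_case : !₂[-(φ * x 0), -(φ * x 1)] = -(φ • x) := by
    ext i
    fin_cases i <;> simp
  rw [iInf_iInf_eq_of_forall_le (a := -(φ * x 0)) (b := -(φ * x 1)), worst_case,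
    distortedMeanVariance_neg_smul hφ.ne']
  intro θ₁ θ₂
  rw [worst_case, distortedMeanVariance_neg_smul hφ.ne']
  exact meanVariance_add_le_distortedMeanVariance hφ _

end MeanVariance

section Insurer

variable {σ b ρ : ℝ}

/-- The exposure of the insurer's wealth to two independent noises, as a function of the strategy
`(π, κ)`: the asset has volatility `σ` along the first noise, and the claims enter with a negative
sign, volatility `b` and correlation `ρ` with the asset. -/
noncomputable def riskExposure (σ b ρ : ℝ) : ℝ × ℝ →ₗ[ℝ] EuclideanSpace ℝ (Fin 2) where
  toFun p := !₂[σ * p.1 - ρ * b * p.2, -(√(1 - ρ ^ 2) * b * p.2)]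
  map_add' p q := by ext i; fin_cases i <;> simp <;> ring
  map_smul' c p := by ext i; fin_cases i <;> simp <;> ring

theorem riskExposure_apply (π κ : ℝ) :
    riskExposure σ b ρ (π, κ) = !₂[σ * π - ρ * b * κ, -(√(1 - ρ ^ 2) * b * κ)] :=
  rfl

theorem riskExposure_injective (hσ : σ ≠ 0) (hb : b ≠ 0) (hρ : ρ ^ 2 < 1) :
    Function.Injective (riskExposure σ b ρ) := by
  have sqrt_ne : √(1 - ρ ^ 2) ≠ 0 := (Real.sqrt_pos.2 (sub_pos.2 hρ)).ne'
  refine (injective_iff_map_eq_zero _).2 fun ⟨π, κ⟩ hp ↦ ?_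
  have hκ : κ = 0 := by simpa [riskExposure_apply, sqrt_ne, hb] using congr($hp 1)
  have hπ : π = 0 := by simpa [riskExposure_apply, hκ, hσ] using congr($hp 0)
  rw [hπ, hκ, Prod.mk_zero_zero]

theorem riskExposure_surjective (hσ : σ ≠ 0) (hb : b ≠ 0) (hρ : ρ ^ 2 < 1) :
    Function.Surjective (riskExposure σ b ρ) :=
  (LinearMap.injective_iff_surjective_of_finrank_eq_finrank (by simp)).1
    (riskExposure_injective hσ hb hρ)

theorem norm_riskExposure_sq (hρ : ρ ^ 2 ≤ 1) (π κ : ℝ) :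
    ‖riskExposure σ b ρ (π, κ)‖ ^ 2 =
      (σ * π - ρ * b * κ) ^ 2 + (1 - ρ ^ 2) * b ^ 2 * κ ^ 2 := by
  simp [riskExposure_apply, EuclideanSpace.real_norm_sq_eq, mul_pow, Real.sq_sqrt (sub_nonneg.2 hρ)]

/-- The market price of risk for the excess return `μ` of the asset and the insurance margin `ν`:
the vector whose inner product with the exposure of `(π, κ)` is the drift `μ * π + ν * κ`. -/
noncomputable def marketPriceOfRisk (σ b ρ μ ν : ℝ) : EuclideanSpace ℝ (Fin 2) :=
  !₂[μ / σ, -((ν + ρ * b * (μ / σ)) / (√(1 - ρ ^ 2) * b))]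

theorem inner_marketPriceOfRisk_riskExposure (hσ : σ ≠ 0) (hb : b ≠ 0) (hρ : ρ ^ 2 < 1)
    (μ ν π κ : ℝ) :
    ⟪marketPriceOfRisk σ b ρ μ ν, riskExposure σ b ρ (π, κ)⟫ = μ * π + ν * κ := by
  have sqrt_ne : √(1 - ρ ^ 2) ≠ 0 := (Real.sqrt_pos.2 (sub_pos.2 hρ)).ne'
  simp only [marketPriceOfRisk, riskExposure_apply, PiLp.inner_apply, Fin.sum_univ_two,
    Matrix.cons_val_zero, Matrix.cons_val_one, RCLike.inner_apply, conj_trivial]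
  field

theorem norm_marketPriceOfRisk_sq (hρ : ρ ^ 2 ≤ 1) (μ ν : ℝ) :
    ‖marketPriceOfRisk σ b ρ μ ν‖ ^ 2 =
      (μ / σ) ^ 2 + (ν + ρ * b * (μ / σ)) ^ 2 / ((1 - ρ ^ 2) * b ^ 2) := by
  simp [marketPriceOfRisk, EuclideanSpace.real_norm_sq_eq, div_pow, mul_pow,
    Real.sq_sqrt (sub_nonneg.2 hρ)]

theorem meanVariance_riskExposure (hσ : σ ≠ 0) (hb : b ≠ 0) (hρ : ρ ^ 2 < 1) (γ μ ν π κ : ℝ) :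
    meanVariance γ (marketPriceOfRisk σ b ρ μ ν) (riskExposure σ b ρ (π, κ)) =
      μ * π + ν * κ - γ / 2 * ((σ * π - ρ * b * κ) ^ 2 + (1 - ρ ^ 2) * b ^ 2 * κ ^ 2) := by
  rw [meanVariance, inner_marketPriceOfRisk_riskExposure hσ hb hρ, norm_riskExposure_sq hρ.le]

theorem distortedMeanVariance_riskExposure (hσ : σ ≠ 0) (hb : b ≠ 0) (hρ : ρ ^ 2 < 1)
    (γ φ μ ν π κ θ₁ θ₂ : ℝ) :
    distortedMeanVariance γ φ (marketPriceOfRisk σ b ρ μ ν) (riskExposure σ b ρ (π, κ))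
        !₂[θ₁, θ₂] =
      μ * π + ν * κ - γ / 2 * ((σ * π - ρ * b * κ) ^ 2 + (1 - ρ ^ 2) * b ^ 2 * κ ^ 2)
        + (σ * π - ρ * b * κ) * θ₁ - √(1 - ρ ^ 2) * b * κ * θ₂
        + (θ₁ ^ 2 + θ₂ ^ 2) / (2 * φ) := by
  have inner_distortion : ⟪riskExposure σ b ρ (π, κ), !₂[θ₁, θ₂]⟫ =
      (σ * π - ρ * b * κ) * θ₁ - √(1 - ρ ^ 2) * b * κ * θ₂ := by
    simp only [riskExposure_apply, PiLp.inner_apply, Fin.sum_univ_two, Matrix.cons_val_zero,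
      Matrix.cons_val_one, RCLike.inner_apply, conj_trivial]
    ring
  have norm_distortion_sq : ‖!₂[θ₁, θ₂]‖ ^ 2 = θ₁ ^ 2 + θ₂ ^ 2 := by
    simp [EuclideanSpace.real_norm_sq_eq]
  rw [distortedMeanVariance, meanVariance_riskExposure hσ hb hρ, inner_distortion,
    norm_distortion_sq]
  ring

end Insurer

/-- **Ambiguity aversion halves the optimal strategy.**
The (unique) maximizer `(π_F, κ_F)` of `(π,κ) ↦ inf_{θ₁,θ₂} F(π,κ,θ₁,θ₂)` equals exactly
one half of the (unique) maximizer `(π_G, κ_G)` of `G = F(·,·,0,0)`, and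
`sup G − sup inf F = (1/4)[ι² + (λ−a+ρbι)²/((1−ρ²)b²)] ≥ 0`. -/
theorem ambiguity_halves_strategy
    (μ₀ r lam a σ b ρ : ℝ)
    (hσ : 0 < σ) (hb : 0 < b) (hρ₁ : -1 < ρ) (hρ₂ : ρ < 1)
    (ι : ℝ) (hι : ι = (μ₀ - r) / σ)
    (F : ℝ → ℝ → ℝ → ℝ → ℝ)
    (hF : ∀ π κ θ₁ θ₂ : ℝ, F π κ θ₁ θ₂ =
      (μ₀ - r) * π + (lam - a) * κ
        - (1/2) * ((σ*π - ρ*b*κ)^2 + (1 - ρ^2) * b^2 * κ^2)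
        + (σ*π - ρ*b*κ) * θ₁ - Real.sqrt (1 - ρ^2) * b * κ * θ₂
        + (1/2) * (θ₁^2 + θ₂^2))
    (G : ℝ → ℝ → ℝ)
    (hG : ∀ π κ : ℝ, G π κ = F π κ 0 0)
    (πF κF : ℝ)
    (hmaxF : ∀ π κ : ℝ,
      (⨅ θ₁ : ℝ, ⨅ θ₂ : ℝ, F π κ θ₁ θ₂) ≤ (⨅ θ₁ : ℝ, ⨅ θ₂ : ℝ, F πF κF θ₁ θ₂))
    (πG κG : ℝ)
    (hmaxG : ∀ π κ : ℝ, G π κ ≤ G πG κG) :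
    πF = πG / 2 ∧ κF = κG / 2 ∧
    (⨆ π : ℝ, ⨆ κ : ℝ, G π κ)
        - (⨆ π : ℝ, ⨆ κ : ℝ, ⨅ θ₁ : ℝ, ⨅ θ₂ : ℝ, F π κ θ₁ θ₂)
      = (1/4) * (ι^2 + (lam - a + ρ*b*ι)^2 / ((1 - ρ^2) * b^2)) ∧
    0 ≤ (1/4) * (ι^2 + (lam - a + ρ*b*ι)^2 / ((1 - ρ^2) * b^2)) := by
  have hρ : ρ ^ 2 < 1 := (sq_lt_one_iff_abs_lt_one ρ).2 (abs_lt.2 ⟨hρ₁, hρ₂⟩)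
  set T := riskExposure σ b ρ
  set m := marketPriceOfRisk σ b ρ (μ₀ - r) (lam - a)
  have T_surj : Function.Surjective T := riskExposure_surjective hσ.ne' hb.ne' hρ
  have F_eq (π κ θ₁ θ₂) : F π κ θ₁ θ₂ = distortedMeanVariance 1 1 m (T (π, κ)) !₂[θ₁, θ₂] := by
    rw [hF, distortedMeanVariance_riskExposure hσ.ne' hb.ne' hρ]
    ring
  have G_eq (π κ) : G π κ = meanVariance 1 m (T (π, κ)) := by
    rw [hG, hF, meanVariance_riskExposure hσ.ne' hb.ne' hρ]
    ring
  have inf_F_eq (π κ) : ⨅ θ₁, ⨅ θ₂, F π κ θ₁ θ₂ = meanVariance 2 m (T (π, κ)) := by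
    simp only [F_eq, iInf_iInf_distortedMeanVariance one_pos, one_add_one_eq_two]
  rw [iSup_iSup_eq_of_forall_le hmaxG, iSup_iSup_eq_of_forall_le hmaxF, hι,
    ← norm_marketPriceOfRisk_sq hρ.le]
  simp only [G_eq, inf_F_eq] at hmaxF hmaxG ⊢
  have T_F : T (πF, κF) = (2 : ℝ)⁻¹ • m :=
    eq_inv_smul_of_surjective_of_forall_meanVariance_le T_surj two_pos (Prod.forall.2 hmaxF)
  have T_G : T (πG, κG) = (1 : ℝ)⁻¹ • m :=
    eq_inv_smul_of_surjective_of_forall_meanVariance_le T_surj one_pos (Prod.forall.2 hmaxG)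
  have half : (πF, κF) = (2 : ℝ)⁻¹ • (πG, κG) :=
    riskExposure_injective hσ.ne' hb.ne' hρ (by rw [map_smul, T_F, T_G, inv_one, one_smul])
  obtain ⟨hπ, hκ⟩ : πF = πG / 2 ∧ κF = κG / 2 := by simpa [div_eq_inv_mul] using half
  refine ⟨hπ, hκ, ?_, by positivity⟩
  rw [T_F, T_G, meanVariance_inv_smul one_ne_zero, meanVariance_inv_smul two_ne_zero]
  ring
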